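/- Let L > 0 and let x ∈ ℝ³ satisfy 0 ≤ x_i ≤ L for each coordinate i. Then Σ_{v ∈ {0,1}³} λ_v(x)·‖x − x_v‖ ≤ (√3/2)·L. -/

import Mathlib

/-- The vertex of the cube `[0,L]³` indexed by `v ∈ {0,1}³`:
`(x_v) i = L` if `v i = 1` and `0` otherwise. -/
noncomputable def cubeVertex (L : ℝ) (v : Fin 3 → Bool) :
    EuclideanSpace ℝ (Fin 3) :=
  (EuclideanSpace.equiv (Fin 3) ℝ).symm fun i => if v i then L else 0

/-- The trilinear weight of the vertex `v ∈ {0,1}³` of the cube `[0,L]³`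
at the point `x`: `λ_v(x) = ∏ i, (x i / L if v i = 1 else (L - x i) / L)`. -/
noncomputable def triWeight (L : ℝ) (v : Fin 3 → Bool)
    (x : EuclideanSpace ℝ (Fin 3)) : ℝ :=
  ∏ i, if v i then x i / L else (L - x i) / L

/-!
The weights are a product probability measure on the vertices under which the `i`-th coordinate of
the random vertex has mean `x i`. By Jensen, the square of the mean distance to `x` is at most the
mean squared distance, which is the sum of the variances of the coordinates; a variable with two
values has variance at most a quarter of their squared distance. So the mean distance is at most
half the diagonal.
-/

section ProductWeights

variable {ι R : Type*} [Fintype ι] [DecidableEq ι] [CommSemiring R]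
  {κ : ι → Type*} [∀ i, Fintype (κ i)]

theorem sum_prod_mul_apply (f : ∀ i, κ i → R) (j : ι) (hf : ∀ i ≠ j, ∑ k, f i k = 1)
    (g : κ j → R) : ∑ v : ∀ i, κ i, (∏ i, f i (v i)) * g (v j) = ∑ k, f j k * g k := by
  -- Absorb `g` into the `j`-th factor, so that the sum of products factors.
  let f' : ∀ i, κ i → R := Function.update f j (f j * g)
  have f'_self : f' j = f j * g := Function.update_self ..
  have f'_of_ne {i : ι} (hi : i ≠ j) : f' i = f i := Function.update_of_ne hi ..
  have prod_f' (v : ∀ i, κ i) : ∏ i, f' i (v i) = (∏ i, f i (v i)) * g (v j) := by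
    rw [Fintype.prod_eq_mul_prod_compl j, Fintype.prod_eq_mul_prod_compl j, f'_self,
      Finset.prod_congr rfl fun i hi ↦ by rw [f'_of_ne (by simpa using hi)], Pi.mul_apply,
      mul_right_comm]
  calc ∑ v : ∀ i, κ i, (∏ i, f i (v i)) * g (v j)
      = ∏ i, ∑ k, f' i k := by simp only [Fintype.prod_sum, prod_f']
    _ = ∑ k, f' j k := Fintype.prod_eq_single j fun i hi ↦ by rw [f'_of_ne hi, hf i hi]
    _ = ∑ k, f j k * g k := by simp only [f'_self, Pi.mul_apply]

end ProductWeights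

section Box

variable {ι : Type*} [Fintype ι]

/-- The weight at the vertex `v` of the unit cube `[0,1]^ι` in multilinear interpolation at the
point `t`. -/
def multilinearWeight (t : ι → ℝ) (v : ι → Bool) : ℝ :=
  ∏ i, if v i then t i else 1 - t i

theorem multilinearWeight_nonneg {t : ι → ℝ} (ht : ∀ i, t i ∈ Set.Icc 0 1) (v : ι → Bool) :
    0 ≤ multilinearWeight t v := by
  refine Finset.prod_nonneg fun i _ ↦ ?_
  split_ifs
  exacts [(ht i).1, sub_nonneg.2 (ht i).2]

theorem sum_multilinearWeight [DecidableEq ι] (t : ι → ℝ) : ∑ v, multilinearWeight t v = 1 := by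
  simpa [multilinearWeight] using
    (Fintype.prod_sum fun i b ↦ if b = true then t i else 1 - t i).symm

theorem sum_multilinearWeight_mul_apply [DecidableEq ι] (t : ι → ℝ) (j : ι) (g : Bool → ℝ) :
    ∑ v, multilinearWeight t v * g (v j) = t j * g true + (1 - t j) * g false := by
  simpa [multilinearWeight] using
    sum_prod_mul_apply (fun i b ↦ if b = true then t i else 1 - t i) j (by simp) g

variable {E : ι → Type*}

/-- The vertex of the box with opposite vertices `a` and `b` indexed by `v`. The edges of the box
are segments in arbitrary spaces `E i`; an ordinary box is the case `E i = ℝ`. -/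
def boxVertex (a b : PiLp 2 E) (v : ι → Bool) : PiLp 2 E :=
  WithLp.toLp 2 fun i ↦ if v i then b i else a i

variable [∀ i, SeminormedAddCommGroup (E i)]

theorem sum_mul_one_sub_mul_dist_sq_le (a b : PiLp 2 E) (t : ι → ℝ) :
    ∑ i, t i * (1 - t i) * dist (a i) (b i) ^ 2 ≤ (dist a b / 2) ^ 2 := by
  have mul_one_sub_le (s : ℝ) : s * (1 - s) ≤ 1 / 4 := by linarith [sq_nonneg (s - 1 / 2)]
  calc ∑ i, t i * (1 - t i) * dist (a i) (b i) ^ 2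
      ≤ ∑ i, 1 / 4 * dist (a i) (b i) ^ 2 := by gcongr with i; exact mul_one_sub_le (t i)
    _ = (dist a b / 2) ^ 2 := by rw [← Finset.mul_sum, ← PiLp.dist_sq_eq_of_L2]; ring

variable [∀ i, NormedSpace ℝ (E i)]

/-- The point with coordinates `t ∈ [0,1]^ι` in the box with opposite vertices `a` and `b`.
Relative coordinates keep degenerate boxes meaningful. -/
noncomputable def boxPoint (a b : PiLp 2 E) (t : ι → ℝ) : PiLp 2 E :=
  WithLp.toLp 2 fun i ↦ AffineMap.lineMap (a i) (b i) (t i)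

theorem sum_multilinearWeight_mul_dist_sq [DecidableEq ι] (a b : PiLp 2 E) (t : ι → ℝ) :
    ∑ v, multilinearWeight t v * dist (boxPoint a b t) (boxVertex a b v) ^ 2 =
      ∑ i, t i * (1 - t i) * dist (a i) (b i) ^ 2 := by
  have edge_variance (i : ι) :
      ∑ v, multilinearWeight t v * dist (boxPoint a b t i) (boxVertex a b v i) ^ 2 =
        t i * (1 - t i) * dist (a i) (b i) ^ 2 := by
    calc ∑ v, multilinearWeight t v * dist (boxPoint a b t i) (boxVertex a b v i) ^ 2
        = t i * dist (boxPoint a b t i) (b i) ^ 2 +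
          (1 - t i) * dist (boxPoint a b t i) (a i) ^ 2 :=
        sum_multilinearWeight_mul_apply t i
          fun c ↦ dist (boxPoint a b t i) (if c then b i else a i) ^ 2
      _ = t i * (1 - t i) * dist (a i) (b i) ^ 2 := by
        simp only [boxPoint, dist_lineMap_left, dist_lineMap_right, mul_pow, Real.norm_eq_abs,
          sq_abs]
        ring
  simp only [PiLp.dist_sq_eq_of_L2, Finset.mul_sum]
  rw [Finset.sum_comm]
  exact Finset.sum_congr rfl fun i _ ↦ edge_variance i

theorem triWeight_sum_dist_le_general [DecidableEq ι] (a b : PiLp 2 E) {t : ι → ℝ}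
    (ht : ∀ i, t i ∈ Set.Icc 0 1) :
    ∑ v, multilinearWeight t v * dist (boxPoint a b t) (boxVertex a b v) ≤ dist a b / 2 := by
  refine le_of_sq_le_sq ?_ (by positivity)
  calc (∑ v, multilinearWeight t v * dist (boxPoint a b t) (boxVertex a b v)) ^ 2
      ≤ ∑ v, multilinearWeight t v * dist (boxPoint a b t) (boxVertex a b v) ^ 2 :=
        Real.pow_arith_mean_le_arith_mean_pow _ _ _ (fun v _ ↦ multilinearWeight_nonneg ht v)
          (sum_multilinearWeight t) (fun _ _ ↦ dist_nonneg) 2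
    _ = ∑ i, t i * (1 - t i) * dist (a i) (b i) ^ 2 := sum_multilinearWeight_mul_dist_sq a b t
    _ ≤ (dist a b / 2) ^ 2 := sum_mul_one_sub_mul_dist_sq_le a b t

end Box

theorem boxPoint_zero_const {ι : Type*} {L : ℝ} (hL : L ≠ 0) (x : EuclideanSpace ℝ ι) :
    boxPoint 0 (WithLp.toLp 2 fun _ ↦ L) (fun i ↦ x i / L) = x := by
  ext i
  simp [boxPoint, AffineMap.lineMap_apply, hL]

theorem euclideanNorm_toLp_const {ι : Type*} [Fintype ι] (L : ℝ) :
    ‖(WithLp.toLp 2 fun _ ↦ L : EuclideanSpace ℝ ι)‖ = √(Fintype.card ι) * |L| := by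
  simp [EuclideanSpace.norm_eq, Real.sqrt_sq_eq_abs]

theorem cubeVertex_eq_boxVertex (L : ℝ) (v : Fin 3 → Bool) :
    cubeVertex L v = boxVertex 0 (WithLp.toLp 2 fun _ ↦ L) v := rfl

theorem triWeight_eq_multilinearWeight {L : ℝ} (hL : L ≠ 0) (v : Fin 3 → Bool)
    (x : EuclideanSpace ℝ (Fin 3)) : triWeight L v x = multilinearWeight (fun i ↦ x i / L) v := by
  simp only [triWeight, multilinearWeight, sub_div, div_self hL]

/-- For a point `x` of the cube `[0,L]³`, the trilinear average of the
Euclidean distances to the vertices is at most `(√3/2) * L`. -/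
theorem triWeight_sum_dist_le
    (L : ℝ) (hL : 0 < L) (x : EuclideanSpace ℝ (Fin 3))
    (hx : ∀ i, 0 ≤ x i ∧ x i ≤ L) :
    ∑ v : Fin 3 → Bool, triWeight L v x * ‖x - cubeVertex L v‖ ≤
      Real.sqrt 3 / 2 * L := by
  have ht (i : Fin 3) : x i / L ∈ Set.Icc 0 1 :=
    ⟨div_nonneg (hx i).1 hL.le, div_le_one_of_le₀ (hx i).2 hL.le⟩
  have diagonal : dist (0 : EuclideanSpace ℝ (Fin 3)) (WithLp.toLp 2 fun _ ↦ L) = √3 * L := by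
    rw [dist_zero_left, euclideanNorm_toLp_const, Fintype.card_fin, abs_of_pos hL, Nat.cast_ofNat]
  simpa only [boxPoint_zero_const hL.ne', ← triWeight_eq_multilinearWeight hL.ne',
    ← cubeVertex_eq_boxVertex, dist_eq_norm x, diagonal, mul_div_right_comm] using
    triWeight_sum_dist_le_general 0 (WithLp.toLp 2 fun _ ↦ L) ht
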